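/- Let (λ_n)_{n≥1} be positive real numbers satisfying (i) Σ_{n≥1} 1/λ_n = +∞ and (ii) the doubling condition: there exists C > 1 such that C⁻¹ λ_n ≤ λ_k ≤ C λ_n whenever n ≥ 1 and n ≤ k ≤ 2n; assume also λ_n ≥ 1 for all n. Fix a ∈ 𝕋. Then for every f ∈ L²(𝕋, m) with 0 ≤ f ≤ 2 m-a.e. and ‖f‖_{ℓ²(λ)} < ∞, every nonempty compact set E ⊆ 𝕋 containing the support of the measure f·m, and every δ > 0, there exist g ∈ L²(𝕋, m) with 0 ≤ g ≤ 2 m-a.e. and ‖g‖_{ℓ²(λ)} < ∞, and a nonempty compact set K ⊆ 𝕋 containing the support of g·m, such that K does not meet some open arc containing a, and d_𝒞(E,K) + ‖f − g‖_{ℓ²(λ)} < δ. -/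

import Mathlib

open MeasureTheory Filter Topology

noncomputable section

/-- Normalized Haar (arc-length) probability measure on the circle `𝕋 = ℝ/ℤ`. -/
def hm : Measure UnitAddCircle := AddCircle.haarAddCircle

/-- Fourier coefficients of a real-valued function on the circle. -/
def fc (f : UnitAddCircle → ℝ) (n : ℤ) : ℂ := fourierCoeff (fun x => (f x : ℂ)) n

/-- The support of the measure `f·m`: the complement of the largest open set on which `f`
vanishes `m`-a.e. -/
def measSupport (f : UnitAddCircle → ℝ) : Set UnitAddCircle :=
  (⋃₀ {U : Set UnitAddCircle | IsOpen U ∧ ∀ᵐ x ∂hm, x ∈ U → f x = 0})ᶜ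

/-- The Hausdorff-type metric `d_𝒞(E,K) = sup_{ζ∈E} dist(ζ,K) + sup_{ξ∈K} dist(ξ,E)` on
nonempty compact subsets of the circle. -/
def dC (E K : Set UnitAddCircle) : ℝ :=
  (⨆ x : E, Metric.infDist (x : UnitAddCircle) K) +
    ⨆ y : K, Metric.infDist (y : UnitAddCircle) E

/-- The weighted `ℓ²(λ)` distance `‖f − g‖_{ℓ²(λ)}`. -/
def dlam (lam : ℕ → ℝ) (f g : UnitAddCircle → ℝ) : ℝ :=
  Real.sqrt (∑' n : ℤ, ‖fc f n - fc g n‖ ^ 2 * lam n.natAbs)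

lemma gamma_exists (p : ℕ) : ∀ ε : ℝ, 0 < ε → ∃ γ : ℝ → ℝ, ContDiff ℝ (⊤ : ℕ∞) γ ∧ HasCompactSupport γ ∧
    (∃ r > 0, ∀ x, |x| ≤ r → iteratedDeriv p γ x = 1) ∧
    ∀ x, -ε ≤ iteratedDeriv p γ x ∧ iteratedDeriv p γ x ≤ 1 := by
  induction p with
  | zero =>
    intro ε hε
    let b : ContDiffBump (0 : ℝ) := ⟨1, 2, by norm_num, by norm_num⟩
    refine ⟨b, b.contDiff, b.hasCompactSupport, ⟨1, one_pos, ?_⟩, ?_⟩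
    · intro x hx
      simp only [iteratedDeriv_zero]
      exact b.one_of_mem_closedBall (by simpa using hx)
    · intro x
      simp only [iteratedDeriv_zero]
      exact ⟨by linarith [b.nonneg (x := x)], b.le_one⟩
  | succ p ih =>
    intro ε hε
    set ε0 := min ε 1 / 4 with hε0
    have hm1 : min ε 1 ≤ ε := min_le_left _ _
    have hm2 : min ε 1 ≤ 1 := min_le_right _ _
    have hm3 : 0 < min ε 1 := lt_min hε one_pos
    obtain ⟨γ, hγ, hγc, ⟨r, hr, hr1⟩, hb⟩ := ih ε0 (by positivity)
    obtain ⟨L, hL0, hL⟩ : ∃ L > 0, ∀ x, L ≤ |x| → γ x = 0 := by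
      obtain ⟨L, hL⟩ := hγc.isCompact.isBounded.subset_closedBall 0
      refine ⟨max L 0 + 1, by positivity, fun x hx => ?_⟩
      by_contra h
      have := hL (subset_tsupport _ h)
      simp at this
      linarith [le_max_left L 0]
    have hLβ : ∀ x, L < |x| → iteratedDeriv p γ x = 0 := by
      intro x hx
      have : γ =ᶠ[𝓝 x] fun _ => 0 := by
        filter_upwards [(continuous_abs.isOpen_preimage _ isOpen_Ioi).mem_nhds hx] with y hy
        exact hL y (le_of_lt hy)
      rw [this.iteratedDeriv_eq]
      simp
    obtain ⟨R, hR⟩ : ∃ R : ℝ, max (max 1 (2 * L / r)) (max 2 (1 / ε0)) ≤ R := ⟨_, le_rfl⟩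
    simp only [max_le_iff] at hR
    obtain ⟨⟨hR1, hR2⟩, hR3, hR4⟩ := hR
    have hR0 : 0 < R := by linarith
    have hε0p : 0 < ε0 := by positivity
    rw [div_le_iff₀ hr] at hR2
    rw [div_le_iff₀ hε0p] at hR4
    set s := (R⁻¹) ^ (p + 1) with hs
    have hs0 : 0 < s := by positivity
    have hsR : s ≤ R⁻¹ := by
      rw [hs, pow_succ]
      exact mul_le_of_le_one_left (by positivity) (pow_le_one₀ (by positivity) (inv_le_one_of_one_le₀ hR1))
    have hs2 : s ≤ 1 / 2 := hsR.trans (by rw [inv_le_comm₀ hR0 (by norm_num)]; linarith)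
    have hsε : s ≤ ε0 := hsR.trans (by rw [inv_le_comm₀ hR0 hε0p, inv_eq_one_div, div_le_iff₀ hε0p]; linarith)
    set γ1 : ℝ → ℝ := fun x => (1 - s)⁻¹ * (γ x - (s * R ^ p) * γ (R⁻¹ * x)) with hγ1
    have hγ1c : ContDiff ℝ (⊤ : ℕ∞) γ1 := by
      have : ContDiff ℝ (⊤ : ℕ∞) fun x => γ (R⁻¹ * x) := hγ.comp (contDiff_const.mul contDiff_id)
      exact contDiff_const.mul (hγ.sub (contDiff_const.mul this))
    have hder : ∀ x, iteratedDeriv p γ1 x = (1 - s)⁻¹ * (iteratedDeriv p γ x - s * iteratedDeriv p γ (R⁻¹ * x)) := by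
      intro x
      have h1 : ContDiffAt ℝ p γ x := (hγ.of_le (by exact_mod_cast le_top)).contDiffAt
      have h2' : ContDiff ℝ p fun x => γ (R⁻¹ * x) :=
        (hγ.of_le (by exact_mod_cast le_top)).comp (contDiff_const.mul contDiff_id)
      have h2 := h2'.contDiffAt (x := x)
      rw [hγ1, iteratedDeriv_const_mul (c := (1-s)⁻¹) (f := fun x => γ x - (s * R ^ p) * γ (R⁻¹ * x)) (h1.sub (contDiffAt_const.mul h2))]
      rw [iteratedDeriv_fun_sub h1 (contDiffAt_const.mul h2), iteratedDeriv_const_mul (c := s * R ^ p) (f := fun x => γ (R⁻¹ * x)) h2]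
      rw [iteratedDeriv_comp_const_mul (hγ.of_le (by exact_mod_cast le_top))]
      have : R ^ p * (R⁻¹) ^ p = 1 := by rw [← mul_pow, mul_inv_cancel₀ hR0.ne', one_pow]
      congr 2
      calc _ = s * (R ^ p * (R⁻¹) ^ p) * iteratedDeriv p γ (R⁻¹ * x) := by ring
        _ = _ := by rw [this, mul_one]
    set M := R * L with hM
    have hM0 : 0 < M := by positivity
    have hMz : ∀ x, M ≤ |x| → γ1 x = 0 := by
      intro x hx
      have h1 : γ x = 0 := hL x (le_trans (by nlinarith) hx)
      have h2 : γ (R⁻¹ * x) = 0 := hL _ (by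
        rw [abs_mul, abs_of_pos (inv_pos.2 hR0), inv_mul_eq_div, le_div_iff₀ hR0]; linarith)
      simp [hγ1, h1, h2]
    have hγint : Integrable γ := hγ.continuous.integrable_of_hasCompactSupport hγc
    have hint : ∫ x, γ1 x = 0 := by
      simp only [hγ1]
      rw [integral_const_mul, integral_sub hγint ((hγint.comp_mul_left' (inv_ne_zero hR0.ne')).const_mul _),
        integral_const_mul, Measure.integral_comp_mul_left]
      simp only [inv_inv, abs_of_pos hR0, smul_eq_mul]
      have : s * R ^ p * R = 1 := by
        rw [hs, mul_assoc, ← pow_succ, ← mul_pow, inv_mul_cancel₀ hR0.ne', one_pow]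
      rw [← mul_assoc, this]; simp
    have hIoc : ∫ x in (-M)..M, γ1 x = 0 := by
      rw [intervalIntegral.integral_of_le (by linarith), setIntegral_eq_integral_of_forall_compl_eq_zero, hint]
      intro x hx
      apply hMz
      by_contra h
      push Not at h
      rw [abs_lt] at h
      exact hx ⟨h.1, h.2.le⟩
    have hcont := hγ1c.continuous
    set Γ : ℝ → ℝ := fun x => ∫ t in (-M)..x, γ1 t with hΓ
    have hΓd : ∀ x, HasDerivAt Γ (γ1 x) x := fun x =>
      intervalIntegral.integral_hasDerivAt_right (hcont.intervalIntegrable _ _)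
        (hcont.stronglyMeasurableAtFilter _ _) hcont.continuousAt
    have hdΓ : deriv Γ = γ1 := funext fun x => (hΓd x).deriv
    refine ⟨Γ, ?_, ?_, ⟨r, hr, ?_⟩, ?_⟩
    · rw [contDiff_infty_iff_deriv]
      exact ⟨fun x => (hΓd x).differentiableAt, by rw [hdΓ]; exact hγ1c⟩
    · apply HasCompactSupport.intro (isCompact_Icc (a := -M) (b := M))
      intro x hx
      rw [Set.mem_Icc, not_and_or, not_le, not_le] at hx
      rcases hx with hx | hx
      · simp only [hΓ]
        rw [intervalIntegral.integral_symm, neg_eq_zero]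
        apply intervalIntegral.integral_zero_ae
        refine Eventually.of_forall fun t ht => hMz t ?_
        rw [Set.uIoc_of_le hx.le] at ht
        rw [le_abs]; right; linarith [ht.2]
      · simp only [hΓ]
        rw [← intervalIntegral.integral_add_adjacent_intervals (b := M) (hcont.intervalIntegrable _ _) (hcont.intervalIntegrable _ _), hIoc, zero_add]
        apply intervalIntegral.integral_zero_ae
        refine Eventually.of_forall fun t ht => hMz t ?_
        rw [Set.uIoc_of_le hx.le] at ht
        rw [le_abs]; left; linarith [ht.1]
    · intro x hx
      rw [iteratedDeriv_succ', hdΓ, hder, hr1 x hx, hr1 (R⁻¹ * x)]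
      · rw [mul_one, inv_mul_cancel₀]; linarith
      · rw [abs_mul, abs_of_pos (inv_pos.2 hR0)]
        calc _ ≤ 1 * |x| := by gcongr; exact inv_le_one_of_one_le₀ hR1
          _ ≤ r := by linarith
    · intro x
      rw [iteratedDeriv_succ', hdΓ, hder]
      have h1s : 0 < 1 - s := by linarith
      rw [inv_mul_eq_div, le_div_iff₀ h1s, div_le_iff₀ h1s]
      have hx1 := hb x
      have hx2 := hb (R⁻¹ * x)
      constructor
      · have : s * iteratedDeriv p γ (R⁻¹ * x) ≤ s * 1 := by gcongr; exact hx2.2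
        nlinarith
      · by_cases h : |R⁻¹ * x| ≤ r
        · rw [hr1 _ h]; linarith
        · push Not at h
          rw [abs_mul, abs_of_pos (inv_pos.2 hR0), inv_mul_eq_div, lt_div_iff₀ hR0] at h
          rw [hLβ x (by nlinarith)]
          have : s * (-ε0) ≤ s * iteratedDeriv p γ (R⁻¹ * x) := by gcongr; exact hx2.1
          nlinarith

section FTsec

open scoped FourierTransform

/-- Fourier transform of a real function -/
def FT (γ : ℝ → ℝ) : ℝ → ℂ := 𝓕 (fun x => (γ x : ℂ))

lemma FT_le (γ : ℝ → ℝ) (ξ : ℝ) : ‖FT γ ξ‖ ≤ ∫ x, |γ x| := by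
  unfold FT
  rw [Real.fourier_real_eq]
  refine (norm_integral_le_integral_norm _).trans (le_of_eq ?_)
  congr 1; ext x; simp [Circle.norm_smul]

lemma iteratedDeriv_ofReal (γ : ℝ → ℝ) (hγ : ContDiff ℝ (⊤ : ℕ∞) γ) (n : ℕ) :
    iteratedDeriv n (fun x => (γ x : ℂ)) = fun x => ((iteratedDeriv n γ x : ℝ) : ℂ) := by
  induction n with
  | zero => simp
  | succ n ih =>
    rw [iteratedDeriv_succ, ih]
    ext x
    have h : HasDerivAt (iteratedDeriv n γ) (iteratedDeriv (n+1) γ x) x := by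
      rw [iteratedDeriv_succ]
      exact ((hγ.differentiable_iteratedDeriv n (by exact_mod_cast WithTop.coe_lt_top _)) x).hasDerivAt
    exact h.ofReal_comp.deriv

lemma hcs_iter (γ : ℝ → ℝ) (hc : HasCompactSupport γ) (n : ℕ) :
    HasCompactSupport (iteratedDeriv n γ) := by
  induction n with
  | zero => simpa
  | succ n ih => rw [iteratedDeriv_succ]; exact ih.deriv

lemma cont_iter (γ : ℝ → ℝ) (hγ : ContDiff ℝ (⊤ : ℕ∞) γ) (n : ℕ) :
    Continuous (iteratedDeriv n γ) :=
  hγ.continuous_iteratedDeriv n (by exact_mod_cast le_top)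

lemma contDiff_iter (γ : ℝ → ℝ) (hγ : ContDiff ℝ (⊤ : ℕ∞) γ) (n : ℕ) :
    ContDiff ℝ (⊤ : ℕ∞) (iteratedDeriv n γ) := by
  induction n with
  | zero => simpa
  | succ n ih => rw [iteratedDeriv_succ]; exact (contDiff_infty_iff_deriv.1 ih).2

lemma FT_iter (γ : ℝ → ℝ) (hγ : ContDiff ℝ (⊤ : ℕ∞) γ) (hc : HasCompactSupport γ) (n : ℕ) (ξ : ℝ) :
    FT (iteratedDeriv n γ) ξ = (2 * Real.pi * Complex.I * ξ) ^ n * FT γ ξ := by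
  have hC : ContDiff ℝ (⊤ : ℕ∞) (fun x => (γ x : ℂ)) := Complex.ofRealCLM.contDiff.comp hγ
  have := Real.fourier_iteratedDeriv (f := fun x => (γ x : ℂ)) (N := ⊤) (n := n) hC (by
    intro k _
    rw [iteratedDeriv_ofReal γ hγ]
    exact ((cont_iter γ hγ k).integrable_of_hasCompactSupport (hcs_iter γ hc k)).ofReal) le_top
  rw [iteratedDeriv_ofReal γ hγ] at this
  unfold FT
  rw [this]
  simp

lemma FT_decay (γ : ℝ → ℝ) (hγ : ContDiff ℝ (⊤ : ℕ∞) γ) (hc : HasCompactSupport γ) (n : ℕ) :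
    ∃ K, 0 ≤ K ∧ ∀ ξ, |ξ| ^ n * ‖FT γ ξ‖ ≤ K := by
  refine ⟨∫ x, |iteratedDeriv n γ x|, by positivity, fun ξ => ?_⟩
  have := FT_le (iteratedDeriv n γ) ξ
  rw [FT_iter γ hγ hc, norm_mul, norm_pow] at this
  refine le_trans ?_ this
  gcongr
  simp only [norm_mul, Complex.norm_I, Complex.norm_real, Real.norm_eq_abs, abs_of_pos Real.pi_pos]
  simp
  nlinarith [Real.pi_gt_three, abs_nonneg ξ]

lemma FT_low (γ : ℝ → ℝ) (hγ : ContDiff ℝ (⊤ : ℕ∞) γ) (hc : HasCompactSupport γ) (n : ℕ) :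
    ∃ K, 0 ≤ K ∧ ∀ ξ, ‖FT (iteratedDeriv n γ) ξ‖ ≤ K * |ξ| ^ n := by
  refine ⟨(2 * Real.pi) ^ n * ∫ x, |γ x|, by positivity, fun ξ => ?_⟩
  rw [FT_iter γ hγ hc, norm_mul, norm_pow]
  have := FT_le γ ξ
  simp only [norm_mul, Complex.norm_I, Complex.norm_real, Real.norm_eq_abs, abs_of_pos Real.pi_pos]
  simp only [Complex.norm_ofNat, mul_one, mul_pow]
  calc _ ≤ 2 ^ n * Real.pi ^ n * |ξ| ^ n * ∫ x, |γ x| := by gcongr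
    _ = _ := by ring

/-- periodisation of `x ↦ β (N x)` -/
def per (β : ℝ → ℝ) (N : ℝ) : UnitAddCircle → ℝ :=
  AddCircle.liftIco 1 (-(1/2)) (fun x => β (N * x))

lemma rep (x : UnitAddCircle) : ∃ t : ℝ, t ∈ Set.Ico (-(1/2) : ℝ) (-(1/2) + 1) ∧ (t : UnitAddCircle) = x ∧ ‖x‖ = |t| := by
  have : x ∈ ((↑) : ℝ → UnitAddCircle) '' Set.Ico (-(1/2) : ℝ) (-(1/2) + 1) := by
    rw [AddCircle.coe_image_Ico_eq]; trivial
  obtain ⟨t, ht, rfl⟩ := this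
  refine ⟨t, ht, rfl, ?_⟩
  rw [AddCircle.norm_coe_eq_abs_iff 1 one_ne_zero, abs_le]
  norm_num at ht ⊢
  exact ⟨by linarith [ht.1], by linarith [ht.2]⟩

lemma per_coe (β : ℝ → ℝ) (N : ℝ) (t : ℝ) (ht : t ∈ Set.Ico (-(1/2) : ℝ) (-(1/2) + 1)) :
    per β N (t : UnitAddCircle) = β (N * t) := AddCircle.liftIco_coe_apply ht

lemma per_cont (β : ℝ → ℝ) (hβ : Continuous β) (N L : ℝ) (hL : ∀ x, L ≤ |x| → β x = 0) (hN : 2 * L ≤ N) (hN0 : 0 < N) :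
    Continuous (per β N) := by
  apply AddCircle.liftIco_continuous
  · rw [hL, hL]
    · rw [abs_mul, abs_of_pos hN0]; norm_num; linarith
    · rw [abs_mul, abs_of_pos hN0]; norm_num; linarith
  · fun_prop

lemma fc_per (β : ℝ → ℝ) (N L : ℝ) (hL : ∀ x, L ≤ |x| → β x = 0)
    (hN : 2 * L ≤ N) (hN0 : 0 < N) (n : ℤ) :
    fc (per β N) n = (N⁻¹ : ℝ) * FT β (n / N) := by
  unfold fc per
  have h0 : (fun x : UnitAddCircle => ((AddCircle.liftIco 1 (-(1/2)) (fun x => β (N * x)) x : ℝ) : ℂ)) =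
    AddCircle.liftIco 1 (-(1/2)) (fun x => (β (N * x) : ℂ)) := by
    ext x; rfl
  have h1 := fourierCoeff_eq_intervalIntegral (T := 1) (AddCircle.liftIco 1 (-(1/2)) (fun x => (β (N * x) : ℂ))) n (-(1/2))
  rw [h0]
  refine h1.trans ?_
  rw [FT, Real.fourier_real_eq]
  rw [show (∫ x in (-(1/2):ℝ)..(-(1/2) + 1), fourier (-n) (x : AddCircle (1:ℝ)) • AddCircle.liftIco 1 (-(1/2)) (fun x => (β (N * x) : ℂ)) x) = ∫ x in (-(1/2):ℝ)..(-(1/2) + 1), (Real.fourierChar (-(N * x * (n / N)))) • (β (N * x) : ℂ) from ?_]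
  · rw [intervalIntegral.integral_of_le (by norm_num), setIntegral_eq_integral_of_forall_compl_eq_zero]
    · rw [Measure.integral_comp_mul_left (fun v => (Real.fourierChar (-(v * (n / N)))) • (β v : ℂ)) N]
      simp [abs_of_pos hN0]
    · intro x hx
      rw [hL, Complex.ofReal_zero, smul_zero]
      rw [abs_mul, abs_of_pos hN0]
      have : 1 / 2 ≤ |x| := by
        by_contra h
        push Not at h
        rw [abs_lt] at h
        exact hx ⟨by linarith, by linarith⟩
      nlinarith
  · apply intervalIntegral.integral_congr_Ioo_of_le (by norm_num)
    intro x hx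
    simp only
    rw [AddCircle.liftIco_coe_apply (Set.Ioo_subset_Ico_self hx), fourier_coe_apply, Circle.smul_def, Real.fourierChar_apply]
    congr 2
    push_cast
    have : (N : ℂ) ≠ 0 := by exact_mod_cast hN0.ne'
    field_simp

end FTsec

lemma dbl_aux (lam : ℕ → ℝ) (hlam : ∀ n, 1 ≤ lam n) (C : ℝ) (hC : 1 < C)
    (h : ∀ n k : ℕ, 1 ≤ n → n ≤ k → k ≤ 2 * n → C⁻¹ * lam n ≤ lam k ∧ lam k ≤ C * lam n) :
    ∃ q : ℕ, ∀ t m n : ℕ, n - m ≤ t → 1 ≤ m → m ≤ n → lam n ≤ C * ((n:ℝ)/m)^q * lam m ∧ lam m ≤ C * ((n:ℝ)/m)^q * lam n := by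
  obtain ⟨q, hq⟩ := pow_unbounded_of_one_lt C (one_lt_two)
  have hC0 : 0 < C := by linarith
  have hl : ∀ n, 0 < lam n := fun n => by linarith [hlam n]
  have h' : ∀ n k : ℕ, 1 ≤ n → n ≤ k → k ≤ 2 * n → lam n ≤ C * lam k ∧ lam k ≤ C * lam n := by
    intro n k h1 h2 h3
    have := h n k h1 h2 h3
    refine ⟨?_, this.2⟩
    have h4 := this.1
    rw [inv_mul_le_iff₀ hC0] at h4
    exact h4
  refine ⟨q, fun t => ?_⟩
  induction t with
  | zero =>
    intro m n h1 h2 h3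
    obtain rfl : m = n := by omega
    have : (m:ℝ) ≠ 0 := by positivity
    rw [div_self this, one_pow, mul_one]
    have := hl m
    constructor <;> nlinarith
  | succ t ih =>
    intro m n h1 h2 h3
    have hm : (0:ℝ) < m := by positivity
    by_cases hn : n ≤ 2 * m
    · have := h' m n h2 h3 hn
      have h4 : 1 ≤ ((n:ℝ)/m)^q := one_le_pow₀ (by rw [le_div_iff₀ hm]; simpa using h3)
      have e1 : C * lam m ≤ C * ((n:ℝ)/m)^q * lam m := by
        have := hl m
        gcongr; nlinarith
      have e2 : C * lam n ≤ C * ((n:ℝ)/m)^q * lam n := by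
        have := hl n
        gcongr; nlinarith
      exact ⟨this.2.trans e1, this.1.trans e2⟩
    · push Not at hn
      have i := ih (2 * m) n (by omega) (by omega) (by omega)
      have j := h' m (2 * m) h2 (by omega) le_rfl
      have e : ((n:ℝ)/m)^q = 2^q * ((n:ℝ)/((2 * m : ℕ):ℝ))^q := by
        rw [← mul_pow]; congr 1; push_cast; field_simp
      set Y := ((n:ℝ)/((2 * m : ℕ):ℝ))^q
      have hY : 0 ≤ Y := by positivity
      rw [e]
      have a1 := hl m
      have a2 := hl n
      constructor
      · calc lam n ≤ C * Y * lam (2 * m) := i.1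
          _ ≤ C * Y * (C * lam m) := by gcongr; exact j.2
          _ ≤ C * Y * (2^q * lam m) := by gcongr
          _ = _ := by ring
      · calc lam m ≤ C * lam (2 * m) := j.1
          _ ≤ C * (C * Y * lam n) := by gcongr; exact i.2
          _ ≤ 2 ^ q * (C * Y * lam n) := by gcongr
          _ = _ := by ring

/-- ratio of smaller to bigger -/
def dd (m n : ℕ) : ℝ := if m ≤ n then (m : ℝ) / n else (n : ℝ) / m

lemma dd_nonneg (m n : ℕ) : 0 ≤ dd m n := by unfold dd; split_ifs <;> positivity
lemma dd_le_one (m n : ℕ) : dd m n ≤ 1 := by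
  unfold dd; split_ifs with h
  · exact div_le_one_of_le₀ (by exact_mod_cast h) (by positivity)
  · exact div_le_one_of_le₀ (by exact_mod_cast (le_of_not_ge h)) (by positivity)

lemma dbl_dd (lam : ℕ → ℝ) (C : ℝ) (q : ℕ)
   (h : ∀ t m n : ℕ, n - m ≤ t → 1 ≤ m → m ≤ n → lam n ≤ C * ((n:ℝ)/m)^q * lam m ∧ lam m ≤ C * ((n:ℝ)/m)^q * lam n)
   (m n : ℕ) (hm : 1 ≤ m) (hn : 1 ≤ n) : lam n * dd n m ^ q ≤ C * lam m := by
  have hm' : (0:ℝ) < m := by positivity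
  have hn' : (0:ℝ) < n := by positivity
  have key : ∀ x : ℝ, 0 < x → ∀ y, lam n ≤ C * x ^ q * lam m → y = x⁻¹ → lam n * y ^ q ≤ C * lam m := by
    intro x hx y h1 h2
    rw [h2, inv_pow, ← div_eq_mul_inv, div_le_iff₀ (by positivity)]
    linarith
  unfold dd
  split_ifs with hc
  · exact key ((m:ℝ)/n) (by positivity) _ (h (m - n) n m le_rfl hn hc).2 (by rw [inv_div])
  · exact key ((n:ℝ)/m) (by positivity) _ (h (n - m) m n le_rfl hm (by omega)).1 (by rw [inv_div])

/-- comparison kernel -/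
def ee (n m : ℕ) : ℝ := if m ≤ n then 1 else ((n:ℝ)/m)^2

lemma ee_nonneg (m n : ℕ) : 0 ≤ ee m n := by unfold ee; split_ifs <;> positivity

lemma ee_sum (n : ℕ) (hn : 1 ≤ n) (s : Finset ℕ) : ∑ m ∈ s, ee n m ≤ 3 * n := by
  have hsub : s ⊆ Finset.range (n + 1) ∪ Finset.Ioc n (max n (s.sup id)) := by
    intro m hm
    have : m ≤ s.sup id := Finset.le_sup (f := id) hm
    simp; omega
  have hn' : (1:ℝ) ≤ n := by exact_mod_cast hn
  calc _ ≤ ∑ m ∈ Finset.range (n + 1) ∪ Finset.Ioc n (max n (s.sup id)), ee n m :=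
        Finset.sum_le_sum_of_subset_of_nonneg hsub (fun _ _ _ => ee_nonneg _ _)
    _ ≤ ∑ m ∈ Finset.range (n + 1), ee n m + ∑ m ∈ Finset.Ioc n (max n (s.sup id)), ee n m := by
        rw [← Finset.sum_union_inter]
        have := Finset.sum_nonneg (s := Finset.range (n + 1) ∩ Finset.Ioc n (max n (s.sup id))) (fun i _ => ee_nonneg n i)
        linarith
    _ = (n + 1) + ∑ m ∈ Finset.Ioc n (max n (s.sup id)), (n:ℝ)^2 * ((m:ℝ)^2)⁻¹ := by
        congr 1
        · rw [Finset.sum_congr rfl (g := fun _ => (1:ℝ))]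
          · simp
          · intro m hm
            have : m ≤ n := by simp at hm; omega
            simp [ee, this]
        · apply Finset.sum_congr rfl
          intro m hm
          have : ¬ m ≤ n := by simp at hm; omega
          simp only [ee, this, if_false]
          rw [div_pow, div_eq_mul_inv]
    _ ≤ (n + 1) + (n:ℝ)^2 * (n:ℝ)⁻¹ := by
        rw [← Finset.mul_sum]
        gcongr
        refine (sum_Ioc_inv_sq_le_sub (by omega) (le_max_left _ _)).trans ?_
        have : (0:ℝ) ≤ ((max n (s.sup id) : ℕ) : ℝ)⁻¹ := by positivity
        linarith
    _ ≤ _ := by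
        rw [pow_two, mul_assoc, mul_inv_cancel₀ (by positivity)]; linarith

lemma dd_sum1 (n : ℕ) (hn : 1 ≤ n) (I : Finset ℕ) (hI : ∀ N ∈ I, 1 ≤ N) :
    ∑ N ∈ I, dd n N / N ≤ 3 := by
  have hn' : (0:ℝ) < n := by positivity
  have : ∑ N ∈ I, dd n N / N = (∑ N ∈ I, ee n N) / n := by
    rw [Finset.sum_div]
    apply Finset.sum_congr rfl
    intro N hN
    have hN' : (0:ℝ) < N := by have := hI N hN; positivity
    unfold dd ee
    split_ifs with h1 h2 h2
    · obtain rfl : n = N := by omega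
      field_simp
    · field_simp
    · field_simp
    · omega
  rw [this, div_le_iff₀ hn']
  exact ee_sum n hn I

lemma dd_sum2 (N : ℕ) (hN : 1 ≤ N) (F : Finset ℤ) :
    ∑ n ∈ F, dd n.natAbs N ^ 2 ≤ 6 * N := by
  calc _ ≤ ∑ n ∈ F, ee N n.natAbs := by
        apply Finset.sum_le_sum
        intro n _
        unfold ee
        split_ifs with h
        · exact pow_le_one₀ (dd_nonneg _ _) (dd_le_one _ _)
        · unfold dd; simp [h]
    _ = ∑ m ∈ F.image Int.natAbs, (F.filter (fun n => n.natAbs = m)).card • ee N m := by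
        rw [Finset.sum_comp (f := ee N) (g := Int.natAbs)]
    _ ≤ ∑ m ∈ F.image Int.natAbs, 2 * ee N m := by
        apply Finset.sum_le_sum
        intro m _
        rw [nsmul_eq_mul]
        gcongr
        · exact ee_nonneg _ _
        · have : F.filter (fun n => n.natAbs = m) ⊆ {(m:ℤ), -(m:ℤ)} := by
            intro n hn; simp at hn ⊢; omega
          have h2 := (Finset.card_le_card this).trans Finset.card_le_two
          exact_mod_cast h2
    _ ≤ _ := by
        rw [← Finset.mul_sum]
        have := ee_sum N hN (F.image Int.natAbs)
        linarith

lemma core (lam : ℕ → ℝ) (hlam : ∀ n, 1 ≤ lam n) (C K : ℝ) (q : ℕ) (hC : 0 < C) (hK : 0 ≤ K)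
   (h : ∀ m n : ℕ, 1 ≤ m → 1 ≤ n → lam n * dd n m ^ q ≤ C * lam m)
   (I : Finset ℕ) (hI : ∀ N ∈ I, 1 ≤ N) (u : ℕ → ℤ → ℂ)
   (hu : ∀ N ∈ I, ∀ n, ‖u N n‖ ≤ K / N * dd n.natAbs N ^ (q + 2)) (F : Finset ℤ) :
   ∑ n ∈ F, ‖∑ N ∈ I, ((1 / lam N : ℝ) : ℂ) * u N n‖ ^ 2 * lam n.natAbs ≤ 18 * K ^ 2 * C * ∑ N ∈ I, 1 / lam N := by
  have hl : ∀ n, 0 < lam n := fun n => by linarith [hlam n]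
  have key : ∀ n : ℤ, ‖∑ N ∈ I, ((1 / lam N : ℝ) : ℂ) * u N n‖ ^ 2 * lam n.natAbs ≤
      ∑ N ∈ I, 3 * K ^ 2 * C / (N * lam N) * dd n.natAbs N ^ 2 := by
    intro n
    have hR : 0 ≤ ∑ N ∈ I, 3 * K ^ 2 * C / (N * lam N) * dd n.natAbs N ^ 2 :=
      Finset.sum_nonneg fun N hN => by have := hl N; positivity
    rcases eq_or_ne n 0 with rfl | hn
    · rw [Finset.sum_eq_zero]
      · simpa using hR
      · intro N hN
        have := hu N hN 0
        simp [dd] at this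
        simp [this]
    · set m := n.natAbs with hm
      have hm1 : 1 ≤ m := by omega
      have e1 : ‖∑ N ∈ I, ((1 / lam N : ℝ) : ℂ) * u N n‖ ≤ ∑ N ∈ I, 1 / lam N * (K / N * dd m N ^ (q + 2)) := by
        refine (norm_sum_le _ _).trans (Finset.sum_le_sum fun N hN => ?_)
        have := hl N
        rw [norm_mul, Complex.norm_real, Real.norm_of_nonneg (by positivity)]
        gcongr
        exact hu N hN n
      have e2 : (∑ N ∈ I, 1 / lam N * (K / N * dd m N ^ (q + 2))) ^ 2 ≤ (∑ N ∈ I, dd m N / N) *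
          ∑ N ∈ I, K ^ 2 * dd m N ^ (2 * q + 3) / (N * lam N ^ 2) := by
        apply Finset.sum_sq_le_sum_mul_sum_of_sq_le_mul
        · intro N hN; have := dd_nonneg m N; positivity
        · intro N hN; have := dd_nonneg m N; positivity
        · intro N hN
          have := hI N hN
          have := hl N
          apply le_of_eq
          field_simp
          ring
      have e3 := dd_sum1 m hm1 I hI
      have hG : 0 ≤ ∑ N ∈ I, K ^ 2 * dd m N ^ (2 * q + 3) / (N * lam N ^ 2) :=
        Finset.sum_nonneg fun N hN => by have := dd_nonneg m N; positivity
      calc _ ≤ (∑ N ∈ I, 1 / lam N * (K / N * dd m N ^ (q + 2))) ^ 2 * lam m := by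
            have := hl m; gcongr
        _ ≤ (3 * ∑ N ∈ I, K ^ 2 * dd m N ^ (2 * q + 3) / (N * lam N ^ 2)) * lam m := by
            have := hl m
            gcongr
            exact e2.trans (by gcongr)
        _ = ∑ N ∈ I, 3 * K ^ 2 * dd m N ^ (q + 3) / (N * lam N ^ 2) * (lam m * dd m N ^ q) := by
            rw [mul_assoc, Finset.sum_mul, Finset.mul_sum]
            apply Finset.sum_congr rfl
            intro N hN
            ring
        _ ≤ ∑ N ∈ I, 3 * K ^ 2 * dd m N ^ 2 / (N * lam N ^ 2) * (C * lam N) := by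
            apply Finset.sum_le_sum
            intro N hN
            have h1 := dd_nonneg m N
            have h2 := hl N
            have h3 := hl m
            gcongr ?_ * ?_
            · gcongr 3 * K ^ 2 * ?_ / _
              exact pow_le_pow_of_le_one h1 (dd_le_one _ _) (by omega)
            · exact h N m (hI N hN) hm1
        _ = _ := by
            apply Finset.sum_congr rfl
            intro N hN
            have := hI N hN
            have := hl N
            field_simp
  calc _ ≤ ∑ n ∈ F, ∑ N ∈ I, 3 * K ^ 2 * C / (N * lam N) * dd n.natAbs N ^ 2 :=
        Finset.sum_le_sum fun n _ => key n
    _ = ∑ N ∈ I, 3 * K ^ 2 * C / (N * lam N) * ∑ n ∈ F, dd n.natAbs N ^ 2 := by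
        rw [Finset.sum_comm]; simp_rw [Finset.mul_sum]
    _ ≤ ∑ N ∈ I, 3 * K ^ 2 * C / (N * lam N) * (6 * N) := by
        apply Finset.sum_le_sum
        intro N hN
        have := hl N
        gcongr
        exact dd_sum2 N (hI N hN) F
    _ = _ := by
        rw [Finset.mul_sum]
        apply Finset.sum_congr rfl
        intro N hN
        have := hI N hN
        have := hl N
        field_simp
        ring

instance : IsProbabilityMeasure hm := by unfold hm; infer_instance
instance : hm.IsAddHaarMeasure := by unfold hm; infer_instance

lemma fc_eq (g : UnitAddCircle → ℝ) (n : ℤ) : fc g n = ∫ x, fourier (-n) x * (g x : ℂ) ∂hm := rfl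

lemma fc_translate (g : UnitAddCircle → ℝ) (a : UnitAddCircle) (n : ℤ) :
    fc (fun x => g (x - a)) n = fourier (-n) a * fc g n := by
  rw [fc_eq, fc_eq, ← integral_const_mul]
  rw [← integral_add_right_eq_self _ a]
  congr 1; ext x
  simp only [add_sub_cancel_right]
  rw [show (fourier (-n) (x + a) : ℂ) = fourier (-n) x * fourier (-n) a by simp [fourier_apply, AddCircle.toCircle_add]]
  ring

lemma norm_fourier_apply (n : ℤ) (x : UnitAddCircle) : ‖(fourier n x : ℂ)‖ = 1 := by
  rw [fourier_apply]; exact Circle.norm_coe _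

lemma cont_integrable (g : UnitAddCircle → ℂ) (hg : Continuous g) : Integrable g hm :=
  hg.integrable_of_hasCompactSupport (HasCompactSupport.of_compactSpace g)

lemma fc_sum (I : Finset ℕ) (c : ℕ → ℝ) (g : ℕ → UnitAddCircle → ℝ) (hg : ∀ N ∈ I, Continuous (g N)) (n : ℤ) :
    fc (fun x => ∑ N ∈ I, c N * g N x) n = ∑ N ∈ I, (c N : ℂ) * fc (g N) n := by
  simp_rw [fc_eq, ← integral_const_mul]
  rw [← integral_finsetSum]
  · congr 1; ext x
    push_cast
    rw [Finset.mul_sum]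
    exact Finset.sum_congr rfl fun _ _ => by ring
  · intro N hN
    apply cont_integrable
    have := hg N hN
    fun_prop

lemma phi_exists (lam : ℕ → ℝ) (hlam : ∀ n, 1 ≤ lam n)
    (hdiv : ¬ Summable (fun n : ℕ => 1 / lam (n + 1))) (C : ℝ) (q : ℕ) (hC : 0 < C)
    (h : ∀ m n : ℕ, 1 ≤ m → 1 ≤ n → lam n * dd n m ^ q ≤ C * lam m)
    (a : UnitAddCircle) (ε τ : ℝ) (hε : 0 < ε) (hτ : 0 < τ) :
    ∃ φ : UnitAddCircle → ℝ, Continuous φ ∧ (∀ x, -ε ≤ φ x ∧ φ x ≤ 1) ∧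
      (∃ ρ > 0, ∀ x, dist x a < ρ → φ x = 1) ∧
      Summable (fun n : ℤ => ‖fc φ n‖ ^ 2 * lam n.natAbs) ∧
      ∑' n : ℤ, ‖fc φ n‖ ^ 2 * lam n.natAbs ≤ τ := by
  have hl : ∀ n, 0 < lam n := fun n => by linarith [hlam n]
  obtain ⟨γ, hγ, hγc, ⟨r, hr, hr1⟩, hb⟩ := gamma_exists (q + 2) ε hε
  set β := iteratedDeriv (q + 2) γ with hβ
  have hβc : Continuous β := cont_iter γ hγ _
  obtain ⟨K1, hK1, hlow⟩ := FT_low γ hγ hγc (q + 2)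
  obtain ⟨K2, hK2, hhigh⟩ := FT_decay β (contDiff_iter γ hγ _) (hcs_iter γ hγc _) (q + 2)
  rw [← hβ] at hlow
  obtain ⟨L, hL0, hL⟩ : ∃ L > 0, ∀ x, L ≤ |x| → β x = 0 := by
    obtain ⟨L, hL⟩ := (hcs_iter γ hγc (q + 2)).isCompact.isBounded.subset_closedBall 0
    refine ⟨max L 0 + 1, by positivity, fun x hx => ?_⟩
    by_contra h
    have := hL (subset_tsupport _ h)
    simp at this
    linarith [le_max_left L 0]
  set K := K1 + K2 with hK
  set N0 := ⌈2 * L⌉₊ + 1 with hN0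
  have hdiv' : ¬ Summable (fun n : ℕ => 1 / lam n) := by
    rwa [← summable_nat_add_iff 1]
  rw [not_summable_iff_tendsto_nat_atTop_of_nonneg (fun n => by have := hl n; positivity)] at hdiv'
  obtain ⟨M, hM⟩ := (hdiv'.eventually_ge_atTop (18 * K ^ 2 * C / τ + 1 + ∑ i ∈ Finset.range N0, 1 / lam i)).and (eventually_ge_atTop N0) |>.exists
  set I := Finset.Ico N0 M with hI
  set S := ∑ N ∈ I, 1 / lam N with hS
  have hS1 : 18 * K ^ 2 * C / τ + 1 ≤ S := by
    rw [hS, hI, Finset.sum_Ico_eq_sub _ hM.2]; linarith [hM.1]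
  have hS0 : 0 < S := by
    have : 0 ≤ 18 * K ^ 2 * C / τ := by positivity
    linarith
  have hI1 : ∀ N ∈ I, 1 ≤ N ∧ 2 * L ≤ N := by
    intro N hN
    have h1 : N0 ≤ N := (Finset.mem_Ico.1 hN).1
    refine ⟨by omega, ?_⟩
    have h2 := Nat.le_ceil (2 * L)
    have h3 : (⌈2 * L⌉₊ : ℝ) ≤ N := by exact_mod_cast (by omega)
    linarith
  have hper : ∀ N ∈ I, Continuous (per β N) := fun N hN =>
    per_cont β hβc N L hL (hI1 N hN).2 (by exact_mod_cast (hI1 N hN).1)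
  have hfc : ∀ N ∈ I, ∀ n : ℤ, ‖fc (per β N) n‖ ≤ K / N * dd n.natAbs N ^ (q + 2) := by
    intro N hN n
    have hN' : (0:ℝ) < N := by exact_mod_cast (hI1 N hN).1
    rw [fc_per β N L hL (hI1 N hN).2 hN', norm_mul, Complex.norm_real, Real.norm_of_nonneg (by positivity),
      div_mul_eq_mul_div, ← div_eq_inv_mul]
    gcongr
    have hn : |(n:ℝ) / N| = (n.natAbs : ℝ) / N := by
      rw [abs_div, abs_of_pos hN', Nat.cast_natAbs]; simp
    unfold dd
    split_ifs with hc
    · refine (hlow _).trans ?_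
      rw [hn]; gcongr; linarith
    · have h2 := hhigh ((n:ℝ)/N)
      rw [hn] at h2
      have hn0 : (0:ℝ) < n.natAbs := by
        have : 0 < n.natAbs := by omega
        exact_mod_cast this
      have : ((N:ℝ) / n.natAbs) ^ (q+2) * ((n.natAbs:ℝ) / N)^(q+2) = 1 := by
        rw [← mul_pow]; field_simp; simp
      calc ‖FT β (n / N)‖ = (((N:ℝ) / n.natAbs) ^ (q+2) * ((n.natAbs:ℝ) / N)^(q+2)) * ‖FT β (n / N)‖ := by rw [this, one_mul]
        _ = ((N:ℝ) / n.natAbs) ^ (q+2) * (((n.natAbs:ℝ) / N)^(q+2) * ‖FT β (n / N)‖) := by ring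
        _ ≤ ((N:ℝ) / n.natAbs) ^ (q+2) * K := by gcongr; linarith
        _ = _ := by ring
  have hcore := core lam hlam C K q hC (by positivity) h I (fun N hN => (hI1 N hN).1) (fun N n => fc (per β N) n) hfc
  set φ0 : UnitAddCircle → ℝ := fun x => ∑ N ∈ I, (S⁻¹ * (1 / lam N)) * per β N x with hφ0
  have hφ0c : Continuous φ0 := continuous_finsetSum _ fun N hN => continuous_const.mul (hper N hN)
  have hfc0 : ∀ n, fc φ0 n = (S⁻¹ : ℝ) * ∑ N ∈ I, ((1 / lam N : ℝ) : ℂ) * fc (per β N) n := by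
    intro n
    rw [hφ0, fc_sum I _ _ hper, Finset.mul_sum]
    refine Finset.sum_congr rfl fun N _ => ?_
    push_cast; ring
  have hnorm : ∀ n, ‖fc (fun x => φ0 (x - a)) n‖ ^ 2 * lam n.natAbs =
      (S⁻¹) ^ 2 * (‖∑ N ∈ I, ((1 / lam N : ℝ) : ℂ) * fc (per β N) n‖ ^ 2 * lam n.natAbs) := by
    intro n
    rw [fc_translate, norm_mul, norm_fourier_apply, one_mul, hfc0, norm_mul, Complex.norm_real, Real.norm_of_nonneg (by positivity)]
    ring
  have hsum : ∀ F : Finset ℤ, ∑ n ∈ F, ‖fc (fun x => φ0 (x - a)) n‖ ^ 2 * lam n.natAbs ≤ τ := by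
    intro F
    simp_rw [hnorm]
    rw [← Finset.mul_sum]
    calc _ ≤ S⁻¹ ^ 2 * (18 * K ^ 2 * C * S) := by gcongr; exact hcore F
      _ = (18 * K ^ 2 * C) / S := by field_simp
      _ ≤ τ := by
        rw [div_le_iff₀ hS0]
        have : 18 * K ^ 2 * C / τ ≤ S := by linarith
        rw [div_le_iff₀ hτ] at this
        linarith
  have hnn : ∀ n, 0 ≤ ‖fc (fun x => φ0 (x - a)) n‖ ^ 2 * lam n.natAbs := fun n => by
    have := hl n.natAbs; positivity
  have hsumS : ∑ N ∈ I, S⁻¹ * (1 / lam N) = 1 := by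
    rw [← Finset.mul_sum, ← hS, inv_mul_cancel₀ hS0.ne']
  have hw : ∀ N, 0 ≤ S⁻¹ * (1 / lam N) := fun N => by have := hl N; positivity
  refine ⟨fun x => φ0 (x - a), hφ0c.comp (continuous_id.sub continuous_const), ?_, ⟨r / (M + 1), by positivity, ?_⟩,
    summable_of_sum_le hnn hsum, Real.tsum_le_of_sum_le hnn hsum⟩
  · intro x
    obtain ⟨t, ht, hx, -⟩ := rep (x - a)
    constructor
    · calc -ε = ∑ N ∈ I, (S⁻¹ * (1 / lam N)) * (-ε) := by rw [← Finset.sum_mul, hsumS, one_mul]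
        _ ≤ _ := by
          refine Finset.sum_le_sum fun N hN => ?_
          refine mul_le_mul_of_nonneg_left ?_ (hw N)
          rw [← hx, per_coe _ _ _ ht]
          exact (hb _).1
    · calc _ ≤ ∑ N ∈ I, (S⁻¹ * (1 / lam N)) * 1 := by
            refine Finset.sum_le_sum fun N hN => ?_
            refine mul_le_mul_of_nonneg_left ?_ (hw N)
            rw [← hx, per_coe _ _ _ ht]
            exact (hb _).2
        _ = 1 := by rw [← Finset.sum_mul, hsumS, one_mul]
  · intro x hxa
    obtain ⟨t, ht, hx, hxt⟩ := rep (x - a)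
    rw [dist_eq_norm, hxt, lt_div_iff₀ (by positivity)] at hxa
    calc _ = ∑ N ∈ I, (S⁻¹ * (1 / lam N)) * 1 := by
            refine Finset.sum_congr rfl fun N hN => ?_
            congr 1
            rw [← hx, per_coe _ _ _ ht]
            apply hr1
            rw [abs_mul, Nat.abs_cast]
            have : (N:ℝ) ≤ M := by exact_mod_cast (Finset.mem_Ico.1 hN).2.le
            nlinarith [abs_nonneg t]
      _ = 1 := by rw [← Finset.sum_mul, hsumS, one_mul]

lemma weight_shift (lam : ℕ → ℝ) (hlam : ∀ n, 1 ≤ lam n) (C : ℝ) (q : ℕ) (hC : 0 < C)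
    (h : ∀ m n : ℕ, 1 ≤ m → 1 ≤ n → lam n * dd n m ^ q ≤ C * lam m) :
    ∃ D, 0 ≤ D ∧ ∀ m k : ℤ, lam (m + k).natAbs ≤ D * (1 + |(k:ℝ)|) ^ q * lam m.natAbs := by
  have hl : ∀ n, 0 < lam n := fun n => by linarith [hlam n]
  have hl0 := hl 0
  have hl1 := hl 1
  refine ⟨C + C * lam 1 + lam 0, by positivity, fun m k => ?_⟩
  have hk1 : 1 ≤ (1 + |(k:ℝ)|) := by linarith [abs_nonneg (k:ℝ)]
  have hkq : 1 ≤ (1 + |(k:ℝ)|) ^ q := one_le_pow₀ hk1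
  have hlm := hlam m.natAbs
  have hP : (1:ℝ) ≤ (1 + |(k:ℝ)|) ^ q * lam m.natAbs := one_le_mul_of_one_le_of_one_le hkq hlm
  have hCl : 0 < C * lam 1 := by positivity
  -- inverse bound for dd
  have key : ∀ a b : ℕ, 1 ≤ a → 1 ≤ b → (a:ℝ) ≤ b * (1 + |(k:ℝ)|) → (b:ℝ) ≤ a * (1 + |(k:ℝ)|) →
      lam a ≤ C * lam b * (1 + |(k:ℝ)|) ^ q := by
    intro a b ha hb h1 h2
    have ha' : (0:ℝ) < a := by positivity
    have hb' : (0:ℝ) < b := by positivity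
    have hd : 1 ≤ dd a b * (1 + |(k:ℝ)|) := by
      unfold dd
      split_ifs
      · rw [div_mul_eq_mul_div, le_div_iff₀ hb']; linarith
      · rw [div_mul_eq_mul_div, le_div_iff₀ ha']; linarith
    have hd' : 1 ≤ dd a b ^ q * (1 + |(k:ℝ)|) ^ q := by
      rw [← mul_pow]; exact one_le_pow₀ hd
    have := hl a
    calc lam a ≤ lam a * (dd a b ^ q * (1 + |(k:ℝ)|) ^ q) := by nlinarith
      _ = (lam a * dd a b ^ q) * (1 + |(k:ℝ)|) ^ q := by ring
      _ ≤ (C * lam b) * (1 + |(k:ℝ)|) ^ q := mul_le_mul_of_nonneg_right (h b a hb ha) (by positivity)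
  rw [mul_assoc]
  rcases eq_or_ne (m + k) 0 with h0 | h0
  · rw [h0]
    simp only [Int.natAbs_zero]
    nlinarith
  rcases eq_or_ne m 0 with rfl | hm
  · have h3 : lam k.natAbs ≤ C * lam 1 * (1 + |(k:ℝ)|) ^ q := by
      have hk : 1 ≤ k.natAbs := by omega
      have hkr : (1:ℝ) ≤ k.natAbs := by exact_mod_cast hk
      have hkk : ((k.natAbs : ℕ):ℝ) = |(k:ℝ)| := by rw [Nat.cast_natAbs]; simp
      apply key _ _ hk le_rfl
      · rw [hkk]; simp
      · push_cast; rw [hkk] at hkr ⊢; nlinarith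
    rw [zero_add]
    refine h3.trans ?_
    have h4 := hl (Int.natAbs 0)
    have h5 := hlam (Int.natAbs 0)
    have : (1 + |(k:ℝ)|) ^ q ≤ (1 + |(k:ℝ)|) ^ q * lam (Int.natAbs 0) := by nlinarith
    calc _ ≤ C * lam 1 * ((1 + |(k:ℝ)|) ^ q * lam (Int.natAbs 0)) := by gcongr
      _ ≤ _ := by gcongr; linarith
  · have h3 : lam (m + k).natAbs ≤ C * lam m.natAbs * (1 + |(k:ℝ)|) ^ q := by
      have e1 : (((m + k).natAbs : ℕ):ℝ) = |(m:ℝ) + k| := by rw [Nat.cast_natAbs]; simp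
      have e2 : ((m.natAbs : ℕ):ℝ) = |(m:ℝ)| := by rw [Nat.cast_natAbs]; simp
      have f1 : 1 ≤ (m + k).natAbs := by omega
      have f2 : 1 ≤ m.natAbs := by omega
      have g1 : (1:ℝ) ≤ |(m:ℝ) + k| := by rw [← e1]; exact_mod_cast f1
      have g2 : (1:ℝ) ≤ |(m:ℝ)| := by rw [← e2]; exact_mod_cast f2
      have a1 := abs_add_le (m:ℝ) k
      have a2 := abs_sub (m + k : ℝ) k
      rw [add_sub_cancel_right] at a2
      have a3 := abs_nonneg (k:ℝ)
      apply key _ _ f1 f2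
      · rw [e1, e2]; nlinarith
      · rw [e1, e2]; nlinarith
    refine h3.trans ?_
    calc _ = C * ((1 + |(k:ℝ)|) ^ q * lam m.natAbs) := by ring
      _ ≤ _ := by gcongr; linarith

lemma fc_mul_hasSum (f φ : UnitAddCircle → ℝ) (hf : Continuous f) (hφ : Continuous φ)
    (hs : Summable fun k => ‖fc f k‖) (n : ℤ) :
    HasSum (fun k => fc f k * fc φ (n - k)) (fc (fun x => f x * φ x) n) := by
  set G : C(UnitAddCircle, ℂ) := ⟨fun x => (f x : ℂ), by fun_prop⟩ with hG
  have hGs : Summable (fourierCoeff G) := Summable.of_norm hs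
  have hpt : ∀ x, HasSum (fun k => fc f k * fourier k x) (f x : ℂ) := by
    intro x
    exact has_pointwise_sum_fourier_series_of_summable hGs x
  have := hasSum_integral_of_summable_integral_norm (μ := hm)
    (F := fun (k : ℤ) (x : UnitAddCircle) => (fc f k * fourier k x) * (fourier (-n) x * (φ x : ℂ))) ?_ ?_
  · convert! this using 1
    · ext k
      rw [fc_eq φ, ← integral_const_mul]
      congr 1; ext x
      rw [show -(n - k) = k + -n by ring, fourier_add]
      ring
    · rw [fc_eq]
      congr 1; ext x
      have h2 := (hpt x).mul_right (fourier (-n) x * (φ x : ℂ))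
      rw [h2.tsum_eq]
      push_cast; ring
  · intro k
    apply cont_integrable
    fun_prop
  · simp_rw [norm_mul, norm_fourier_apply, mul_one, one_mul, integral_const_mul]
    exact hs.mul_right _

lemma mult (lam : ℕ → ℝ) (hlam : ∀ n, 1 ≤ lam n) (D : ℝ) (q : ℕ) (hD : 0 ≤ D)
    (h : ∀ m k : ℤ, lam (m + k).natAbs ≤ D * (1 + |(k:ℝ)|) ^ q * lam m.natAbs)
    (f : UnitAddCircle → ℝ) (hf : Continuous f)
    (hs : Summable fun k : ℤ => ‖fc f k‖ * (1 + |(k:ℝ)|) ^ q) :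
    ∃ B, 0 ≤ B ∧ ∀ φ : UnitAddCircle → ℝ, Continuous φ → Summable (fun n : ℤ => ‖fc φ n‖ ^ 2 * lam n.natAbs) →
      Summable (fun n : ℤ => ‖fc (fun x => f x * φ x) n‖ ^ 2 * lam n.natAbs) ∧
      ∑' n : ℤ, ‖fc (fun x => f x * φ x) n‖ ^ 2 * lam n.natAbs ≤ B * ∑' n : ℤ, ‖fc φ n‖ ^ 2 * lam n.natAbs := by
  have hl : ∀ n, 0 < lam n := fun n => by linarith [hlam n]
  have hs1 : Summable fun k : ℤ => ‖fc f k‖ := by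
    refine Summable.of_nonneg_of_le (fun _ => norm_nonneg _) (fun k => ?_) hs
    have : 1 ≤ (1 + |(k:ℝ)|) ^ q := one_le_pow₀ (by linarith [abs_nonneg (k:ℝ)])
    nlinarith [norm_nonneg (fc f k)]
  set A1 := ∑' k : ℤ, ‖fc f k‖ with hA1
  set A2 := ∑' k : ℤ, ‖fc f k‖ * (1 + |(k:ℝ)|) ^ q with hA2
  have hA1n : 0 ≤ A1 := tsum_nonneg fun _ => norm_nonneg _
  have hA2n : 0 ≤ A2 := tsum_nonneg fun _ => by positivity
  refine ⟨A1 * A2 * D, by positivity, fun φ hφ hφs => ?_⟩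
  set T := ∑' n : ℤ, ‖fc φ n‖ ^ 2 * lam n.natAbs with hT
  have hnn' : ∀ n : ℤ, 0 ≤ ‖fc φ n‖ ^ 2 * lam n.natAbs := fun n => by
    have := hl n.natAbs; positivity
  have hTn : 0 ≤ T := tsum_nonneg hnn'
  have hshift : ∀ (F : Finset ℤ) (k : ℤ), ∑ n ∈ F, ‖fc φ (n - k)‖ ^ 2 * lam n.natAbs ≤ D * (1 + |(k:ℝ)|) ^ q * T := by
    intro F k
    calc _ ≤ ∑ n ∈ F, D * (1 + |(k:ℝ)|) ^ q * (‖fc φ (n - k)‖ ^ 2 * lam (n - k).natAbs) := by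
          refine Finset.sum_le_sum fun n _ => ?_
          have := h (n - k) k
          rw [sub_add_cancel] at this
          calc _ ≤ ‖fc φ (n - k)‖ ^ 2 * (D * (1 + |(k:ℝ)|) ^ q * lam (n - k).natAbs) := by gcongr
            _ = _ := by ring
      _ ≤ _ := by
          rw [← Finset.mul_sum]
          gcongr
          have e : Summable fun n : ℤ => ‖fc φ (n - k)‖ ^ 2 * lam (n - k).natAbs :=
            (Equiv.subRight k).summable_iff.2 hφs
          calc _ ≤ ∑' n : ℤ, ‖fc φ (n - k)‖ ^ 2 * lam (n - k).natAbs := e.sum_le_tsum _ fun n _ => hnn' _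
            _ = T := (Equiv.subRight k).tsum_eq (fun n : ℤ => ‖fc φ n‖ ^ 2 * lam n.natAbs)
  have hfin : ∀ F G : Finset ℤ, ∑ n ∈ F, ‖∑ k ∈ G, fc f k * fc φ (n - k)‖ ^ 2 * lam n.natAbs ≤ A1 * A2 * D * T := by
    intro F G
    calc _ ≤ ∑ n ∈ F, (A1 * ∑ k ∈ G, ‖fc f k‖ * ‖fc φ (n - k)‖ ^ 2) * lam n.natAbs := by
          refine Finset.sum_le_sum fun n _ => ?_
          have := hl n.natAbs
          gcongr
          calc _ ≤ (∑ k ∈ G, ‖fc f k‖ * ‖fc φ (n - k)‖) ^ 2 := by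
                gcongr
                refine (norm_sum_le _ _).trans (le_of_eq ?_)
                simp
            _ ≤ (∑ k ∈ G, ‖fc f k‖) * ∑ k ∈ G, ‖fc f k‖ * ‖fc φ (n - k)‖ ^ 2 := by
                apply Finset.sum_sq_le_sum_mul_sum_of_sq_le_mul
                · intro _ _; positivity
                · intro _ _; positivity
                · intro _ _; apply le_of_eq; ring
            _ ≤ _ := by
                gcongr
                exact hs1.sum_le_tsum _ fun _ _ => norm_nonneg _
      _ = A1 * ∑ k ∈ G, ‖fc f k‖ * ∑ n ∈ F, ‖fc φ (n - k)‖ ^ 2 * lam n.natAbs := by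
          simp_rw [mul_assoc, ← Finset.mul_sum, Finset.sum_mul, Finset.mul_sum]
          rw [Finset.sum_comm]
          simp_rw [mul_assoc]
      _ ≤ A1 * ∑ k ∈ G, ‖fc f k‖ * (D * (1 + |(k:ℝ)|) ^ q * T) := by
          gcongr with k _
          exact hshift F k
      _ = A1 * (∑ k ∈ G, ‖fc f k‖ * (1 + |(k:ℝ)|) ^ q) * D * T := by
          rw [mul_assoc, mul_assoc, Finset.sum_mul]
          congr 1
          refine Finset.sum_congr rfl fun k _ => by ring
      _ ≤ _ := by
          gcongr
          exact hs.sum_le_tsum _ fun _ _ => by positivity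
  have hF : ∀ F : Finset ℤ, ∑ n ∈ F, ‖fc (fun x => f x * φ x) n‖ ^ 2 * lam n.natAbs ≤ A1 * A2 * D * T := by
    intro F
    have ht : Tendsto (fun G : Finset ℤ => ∑ n ∈ F, ‖∑ k ∈ G, fc f k * fc φ (n - k)‖ ^ 2 * lam n.natAbs) atTop
        (𝓝 (∑ n ∈ F, ‖fc (fun x => f x * φ x) n‖ ^ 2 * lam n.natAbs)) := by
      refine tendsto_finsetSum _ fun n _ => ?_
      exact ((fc_mul_hasSum f φ hf hφ hs1 n).norm.pow 2).mul_const _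
    exact le_of_tendsto' ht (hfin F)
  have hnn : ∀ n : ℤ, 0 ≤ ‖fc (fun x => f x * φ x) n‖ ^ 2 * lam n.natAbs := fun n => by
    have := hl n.natAbs; positivity
  exact ⟨summable_of_sum_le hnn hF, Real.tsum_le_of_sum_le hnn hF⟩

lemma FT_cont (κ : ℝ → ℝ) (hκ : Continuous κ) (hc : HasCompactSupport κ) : Continuous (FT κ) := by
  have : FT κ = fun ξ => ∫ v, Real.fourierChar (-(v * ξ)) • (κ v : ℂ) := by
    ext ξ; unfold FT; rw [Real.fourier_real_eq]
  rw [this]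
  refine continuous_of_dominated (bound := fun v => |κ v|) ?_ ?_ ?_ ?_
  · intro ξ
    refine Continuous.aestronglyMeasurable ?_
    simp_rw [Circle.smul_def]
    have := Real.continuous_fourierChar
    fun_prop
  · intro ξ
    refine Eventually.of_forall fun v => ?_
    simp [Circle.norm_smul]
  · exact (hκ.integrable_of_hasCompactSupport hc).abs
  · refine Eventually.of_forall fun v => ?_
    simp_rw [Circle.smul_def]
    have := Real.continuous_fourierChar
    fun_prop

lemma ae_zero (f : UnitAddCircle → ℝ) (E : Set UnitAddCircle) (hsupp : measSupport f ⊆ E) :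
    ∀ᵐ x ∂hm, x ∉ E → f x = 0 := by
  rw [ae_iff]
  apply measure_null_of_locally_null
  intro x hx
  simp only [Set.mem_setOf_eq, Classical.not_imp] at hx
  have : x ∉ measSupport f := fun h => hx.1 (hsupp h)
  simp only [measSupport, Set.mem_compl_iff, not_not, Set.mem_sUnion] at this
  obtain ⟨U, ⟨hU, hf⟩, hxU⟩ := this
  rw [ae_iff] at hf
  refine ⟨{a | ¬ (a ∈ U → f a = 0)}, ?_, hf⟩
  filter_upwards [mem_nhdsWithin_of_mem_nhds (hU.mem_nhds hxU), self_mem_nhdsWithin] with y hy1 hy2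
  simp only [Set.mem_setOf_eq, Classical.not_imp] at hy2 ⊢
  exact ⟨hy1, hy2.2⟩

/-- convolution -/
def conv (ρ f : UnitAddCircle → ℝ) (x : UnitAddCircle) : ℝ := ∫ t, ρ (x - t) * f t ∂hm

lemma conv_cont (ρ f : UnitAddCircle → ℝ) (hρ : Continuous ρ) (hf : Integrable f hm) : Continuous (conv ρ f) := by
  obtain ⟨B, hB⟩ := (isCompact_range hρ).isBounded.exists_norm_le
  unfold conv
  refine continuous_of_dominated (bound := fun t => B * ‖f t‖) ?_ ?_ ?_ ?_
  · intro x
    exact (Continuous.aestronglyMeasurable (by fun_prop)).mul hf.1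
  · intro x
    refine Eventually.of_forall fun t => ?_
    rw [norm_mul]
    gcongr
    exact hB _ ⟨_, rfl⟩
  · exact hf.norm.const_mul _
  · exact Eventually.of_forall fun t => by fun_prop

lemma fc_conv (ρ f : UnitAddCircle → ℝ) (hρ : Continuous ρ) (hf : Integrable f hm) (n : ℤ) :
    fc (conv ρ f) n = fc ρ n * fc f n := by
  obtain ⟨B, hB⟩ := (isCompact_range hρ).isBounded.exists_norm_le
  have h1 : fc (conv ρ f) n = ∫ x, ∫ t, fourier (-n) x * (ρ (x - t) : ℂ) * (f t : ℂ) ∂hm ∂hm := by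
    rw [fc_eq]
    congr 1; ext x
    unfold conv
    rw [← integral_complex_ofReal, ← integral_const_mul]
    congr 1; ext t
    push_cast; ring
  rw [h1, integral_integral_swap]
  · have h2 : ∀ t, ∫ x, fourier (-n) x * (ρ (x - t) : ℂ) * (f t : ℂ) ∂hm = fc ρ n * (fourier (-n) t * (f t : ℂ)) := by
      intro t
      rw [integral_mul_const]
      have := fc_translate ρ t n
      rw [fc_eq] at this
      rw [this]; ring
    simp_rw [h2]
    rw [integral_const_mul, ← fc_eq]
  · have hfs : Integrable (fun z : UnitAddCircle × UnitAddCircle => (f z.2 : ℂ)) (hm.prod hm) :=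
      (hf.ofReal (𝕜 := ℂ)).comp_snd hm
    refine hfs.bdd_mul (c := B) ?_ ?_
    · refine Continuous.aestronglyMeasurable ?_
      fun_prop
    · refine Eventually.of_forall fun z => ?_
      rw [norm_mul, norm_fourier_apply, one_mul, Complex.norm_real]
      exact hB _ ⟨_, rfl⟩

lemma moll (lam : ℕ → ℝ) (hlam : ∀ n, 1 ≤ lam n)
    (f : UnitAddCircle → ℝ) (hf2 : MemLp f 2 hm)
    (hfbd : ∀ᵐ x ∂hm, 0 ≤ f x ∧ f x ≤ 2)
    (hfsum : Summable (fun n : ℤ => ‖fc f n‖ ^ 2 * lam n.natAbs))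
    (E : Set UnitAddCircle) (hsupp : measSupport f ⊆ E) (η σ : ℝ) (hη : 0 < η) (hσ : 0 < σ) (q : ℕ) :
    ∃ f1 : UnitAddCircle → ℝ, Continuous f1 ∧ (∀ x, 0 ≤ f1 x ∧ f1 x ≤ 2) ∧
      (∀ x, x ∉ Metric.cthickening η E → f1 x = 0) ∧
      Summable (fun k : ℤ => ‖fc f1 k‖ * (1 + |(k:ℝ)|) ^ q) ∧
      Summable (fun n : ℤ => ‖fc f1 n‖ ^ 2 * lam n.natAbs) ∧
      Summable (fun n : ℤ => ‖fc f n - fc f1 n‖ ^ 2 * lam n.natAbs) ∧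
      ∑' n : ℤ, ‖fc f n - fc f1 n‖ ^ 2 * lam n.natAbs < σ := by
  have hl : ∀ n, 0 < lam n := fun n => by linarith [hlam n]
  have hf : Integrable f hm := hf2.integrable (by norm_num)
  let b : ContDiffBump (0 : ℝ) := ⟨1/2, 1, by norm_num, by norm_num⟩
  set κ : ℝ → ℝ := b.normed volume with hκ
  have hκs : ContDiff ℝ (⊤ : ℕ∞) κ := b.contDiff_normed
  have hκc : HasCompactSupport κ := b.hasCompactSupport_normed
  have hκ0 : ∀ x, 0 ≤ κ x := b.nonneg_normed
  have hκ1 : ∫ x, κ x = 1 := b.integral_normed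
  have hκz : ∀ x, 1 ≤ |x| → κ x = 0 := by
    intro x hx
    by_contra h
    have : x ∈ Function.support κ := h
    rw [hκ, b.support_normed_eq] at this
    simp at this
    have h1 : b.rOut = 1 := rfl
    linarith
  have hFT0 : FT κ 0 = 1 := by
    unfold FT; rw [Real.fourier_real_eq]
    simp only [mul_zero, neg_zero, AddChar.map_zero_eq_one, one_smul]
    rw [integral_complex_ofReal, hκ1]; simp
  have hFTle : ∀ ξ, ‖FT κ ξ‖ ≤ 1 := by
    intro ξ
    refine (FT_le κ ξ).trans (le_of_eq ?_)
    rw [← hκ1]; congr 1; ext x; exact abs_of_nonneg (hκ0 x)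
  have hFTc := FT_cont κ hκs.continuous hκc
  -- choice of N
  have hbd : ∀ (N : ℕ) (n : ℤ), ‖fc f n - FT κ (n / N) * fc f n‖ ^ 2 * lam n.natAbs ≤ 4 * (‖fc f n‖ ^ 2 * lam n.natAbs) := by
    intro N n
    have h1 : ‖fc f n - FT κ (n / N) * fc f n‖ ≤ 2 * ‖fc f n‖ := by
      refine (norm_sub_le _ _).trans ?_
      rw [norm_mul]
      have := hFTle ((n:ℝ)/N)
      nlinarith [norm_nonneg (fc f n)]
    have := hl n.natAbs
    calc _ ≤ (2 * ‖fc f n‖) ^ 2 * lam n.natAbs := by gcongr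
      _ = _ := by ring
  have hlim : Tendsto (fun N : ℕ => ∑' n : ℤ, ‖fc f n - FT κ (n / N) * fc f n‖ ^ 2 * lam n.natAbs) atTop (𝓝 (∑' n : ℤ, (0:ℝ))) := by
    refine tendsto_tsum_of_dominated_convergence (hfsum.mul_left 4) ?_ ?_
    · intro n
      have h1 : Tendsto (fun N : ℕ => (n:ℝ) / N) atTop (𝓝 0) := tendsto_const_div_atTop_nhds_zero_nat _
      have h2 := (hFTc.tendsto 0).comp h1
      rw [hFT0] at h2
      have h3 := (((tendsto_const_nhds (x := fc f n)).sub (h2.mul_const (fc f n))).norm.pow 2).mul_const (lam n.natAbs)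
      simpa using h3
    · refine Eventually.of_forall fun N n => ?_
      have := hl n.natAbs
      rw [Real.norm_of_nonneg (by positivity)]
      exact hbd N n
  rw [tsum_zero] at hlim
  obtain ⟨N, ⟨hN1, hN2⟩, hN3⟩ := ((hlim.eventually_lt_const hσ).and (eventually_ge_atTop 2)).and
    (tendsto_natCast_atTop_atTop.eventually_ge_atTop (1/η)) |>.exists
  have hNr : (2:ℝ) ≤ N := by exact_mod_cast hN2
  have hN0 : (0:ℝ) < N := by linarith
  set ρ : UnitAddCircle → ℝ := fun x => N * per κ N x with hρ
  have hρc : Continuous ρ := continuous_const.mul (per_cont κ hκs.continuous N 1 hκz (by linarith) hN0)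
  have hρfc : ∀ n, fc ρ n = FT κ (n / N) := by
    intro n
    have : fc ρ n = (N:ℂ) * fc (per κ N) n := by
      rw [fc_eq, fc_eq, ← integral_const_mul]
      congr 1; ext x; simp only [hρ]; push_cast; ring
    rw [this, fc_per κ N 1 hκz (by linarith) hN0]
    push_cast
    rw [← mul_assoc, mul_inv_cancel₀ (by exact_mod_cast hN0.ne'), one_mul]
  have hρ0 : ∀ x, 0 ≤ ρ x := by
    intro x
    obtain ⟨t, ht, hx, -⟩ := rep x
    simp only [hρ]
    rw [← hx, per_coe _ _ _ ht]
    exact mul_nonneg hN0.le (hκ0 _)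
  have hρz : ∀ x, η < ‖x‖ → ρ x = 0 := by
    intro x hx'
    obtain ⟨t, ht, hx, hxt⟩ := rep x
    simp only [hρ]
    rw [← hx, per_coe _ _ _ ht, hκz, mul_zero]
    rw [abs_mul, Nat.abs_cast, ← hxt]
    rw [div_le_iff₀ hη] at hN3
    nlinarith
  have hρ1 : ∫ x, ρ x ∂hm = 1 := by
    have := hρfc 0
    rw [fc_eq] at this
    simp [hFT0] at this
    rw [integral_complex_ofReal] at this
    exact_mod_cast this
  have hρ1' : ∀ x, ∫ t, ρ (x - t) ∂hm = 1 := fun x => by rw [integral_sub_left_eq_self]; exact hρ1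
  obtain ⟨B, hB⟩ := (isCompact_range hρc).isBounded.exists_norm_le
  have hint : ∀ x, Integrable (fun t => ρ (x - t) * f t) hm := by
    intro x
    refine hf.bdd_mul (c := B) (Continuous.aestronglyMeasurable (by fun_prop)) ?_
    exact Eventually.of_forall fun t => hB _ ⟨_, rfl⟩
  have hρint : ∀ x, Integrable (fun t => ρ (x - t)) hm := by
    intro x
    have hc : Continuous (fun t => ρ (x - t)) := by fun_prop
    exact hc.integrable_of_hasCompactSupport (HasCompactSupport.of_compactSpace _)
  have hfc1 : ∀ n, fc (conv ρ f) n = FT κ (n / N) * fc f n := fun n => by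
    rw [fc_conv ρ f hρc hf, hρfc]
  refine ⟨conv ρ f, conv_cont ρ f hρc hf, ?_, ?_, ?_, ?_, ?_, ?_⟩
  · intro x
    constructor
    · apply integral_nonneg_of_ae
      filter_upwards [hfbd] with t ht
      exact mul_nonneg (hρ0 _) ht.1
    · calc conv ρ f x ≤ ∫ t, ρ (x - t) * 2 ∂hm := by
            apply integral_mono_ae (hint x) ((hρint x).mul_const 2)
            filter_upwards [hfbd] with t ht
            exact mul_le_mul_of_nonneg_left ht.2 (hρ0 _)
        _ = 2 := by rw [integral_mul_const, hρ1', one_mul]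
  · intro x hx
    apply integral_eq_zero_of_ae
    filter_upwards [ae_zero f E hsupp] with t ht
    by_cases htE : t ∈ E
    · have : η < ‖x - t‖ := by
        by_contra h
        push Not at h
        apply hx
        exact Metric.mem_cthickening_of_dist_le x t η E htE (by rwa [dist_eq_norm])
      simp [hρz _ this]
    · simp [ht htE]
  · -- decay
    obtain ⟨K, hK, hdec⟩ := FT_decay κ hκs hκc (q + 2)
    have hfle : ∀ n, ‖fc f n‖ ≤ ∫ x, ‖f x‖ ∂hm := by
      intro n
      rw [fc_eq]
      refine (norm_integral_le_integral_norm _).trans (le_of_eq ?_)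
      congr 1; ext x; rw [norm_mul, norm_fourier_apply, one_mul, Complex.norm_real]
    set A := ∫ x, ‖f x‖ ∂hm with hA
    have hA0 : 0 ≤ A := by positivity
    have hps : Summable fun k : ℤ => (A * (N:ℝ) ^ (q+2) * 2 ^ q * K) * (1 / (k:ℝ) ^ 2) :=
      (Real.summable_one_div_int_pow.2 (by norm_num)).mul_left _
    refine Summable.of_norm_bounded_eventually hps ?_
    have : ∀ᶠ k : ℤ in cofinite, k ≠ 0 := (Set.finite_singleton (0:ℤ)).compl_mem_cofinite
    filter_upwards [this] with k hk
    rw [Real.norm_of_nonneg (by positivity), hfc1, norm_mul]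
    have hk1 : 1 ≤ |(k:ℝ)| := by
      have := Int.one_le_abs hk
      exact_mod_cast this
    have hd := hdec ((k:ℝ)/N)
    rw [abs_div, Nat.abs_cast, div_pow, div_mul_eq_mul_div, div_le_iff₀ (by positivity)] at hd
    rw [← sq_abs (k:ℝ)]
    have hk0 : 0 < |(k:ℝ)| := by linarith
    rw [mul_one_div, le_div_iff₀ (by positivity)]
    calc ‖FT κ (k / N)‖ * ‖fc f k‖ * (1 + |(k:ℝ)|) ^ q * |(k:ℝ)| ^ 2
        ≤ ‖FT κ (k / N)‖ * A * (2 * |(k:ℝ)|) ^ q * |(k:ℝ)| ^ 2 := by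
          gcongr
          · exact hfle k
          · linarith
      _ = (|(k:ℝ)| ^ (q + 2) * ‖FT κ (k / N)‖) * (A * 2 ^ q) := by ring
      _ ≤ (K * (N:ℝ) ^ (q+2)) * (A * 2 ^ q) := by gcongr
      _ = _ := by ring
  · refine Summable.of_nonneg_of_le (fun n => ?_) (fun n => ?_) hfsum
    · have := hl n.natAbs; positivity
    · have := hl n.natAbs
      gcongr
      rw [hfc1, norm_mul]
      exact mul_le_of_le_one_left (norm_nonneg _) (hFTle _)
  · simp_rw [hfc1]
    refine Summable.of_nonneg_of_le (fun n => ?_) (fun n => hbd N n) (hfsum.mul_left 4)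
    have := hl n.natAbs; positivity
  · simp_rw [hfc1]
    exact hN1

lemma fc_g (f1 φ : UnitAddCircle → ℝ) (hf : Continuous f1) (hφ : Continuous φ) (c : ℝ) (n : ℤ) :
    fc (fun x => c * (f1 x * (1 - φ x))) n = (c:ℂ) * (fc f1 n - fc (fun x => f1 x * φ x) n) := by
  simp_rw [fc_eq]
  rw [← integral_sub, ← integral_const_mul]
  · congr 1; ext x; push_cast; ring
  · apply cont_integrable; fun_prop
  · apply cont_integrable; fun_prop

lemma geom (E : Set UnitAddCircle) (hEne : E.Nonempty) (a : UnitAddCircle)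
    (η r : ℝ) (hr : 0 < r) (hr2 : 2 * r ≤ η) (hη : η ≤ 1/2) :
    IsCompact (Metric.cthickening η E \ Metric.ball a r) ∧
    (Metric.cthickening η E \ Metric.ball a r).Nonempty ∧
    dC E (Metric.cthickening η E \ Metric.ball a r) ≤ 2 * η := by
  set K := Metric.cthickening η E \ Metric.ball a r with hK
  have key : ∀ x ∈ E, ∃ y ∈ K, dist x y ≤ η := by
    intro x hx
    by_cases h : dist x a < r
    · have hd : dist (a + (r : UnitAddCircle)) a = r := by
        rw [dist_eq_norm, add_sub_cancel_left]
        have : ‖(r : UnitAddCircle)‖ = |r| := by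
          rw [AddCircle.norm_coe_eq_abs_iff]
          · rw [abs_of_pos hr]; norm_num; linarith
          · norm_num
        rw [this, abs_of_pos hr]
      have hxy : dist x (a + (r : UnitAddCircle)) ≤ η := by
        have := dist_triangle_right x (a + (r : UnitAddCircle)) a
        linarith
      refine ⟨a + (r : UnitAddCircle), ⟨?_, ?_⟩, hxy⟩
      · exact Metric.mem_cthickening_of_dist_le _ x _ _ hx (by rwa [dist_comm])
      · rw [Metric.mem_ball, hd]; exact lt_irrefl _
    · exact ⟨x, ⟨Metric.self_subset_cthickening _ hx, h⟩, by rw [dist_self]; linarith⟩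
  have hKne : K.Nonempty := by
    obtain ⟨x, hx⟩ := hEne
    obtain ⟨y, hy, _⟩ := key x hx
    exact ⟨y, hy⟩
  refine ⟨(Metric.isClosed_cthickening.sdiff Metric.isOpen_ball).isCompact, hKne, ?_⟩
  have : Nonempty E := hEne.to_subtype
  have : Nonempty K := hKne.to_subtype
  have h1 : (⨆ x : E, Metric.infDist (x : UnitAddCircle) K) ≤ η := ciSup_le fun x => by
    obtain ⟨y, hy, hxy⟩ := key x x.2
    exact (Metric.infDist_le_dist_of_mem hy).trans hxy
  have h2 : (⨆ y : K, Metric.infDist (y : UnitAddCircle) E) ≤ η := ciSup_le fun y => by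
    have := y.2.1
    rw [Metric.mem_cthickening_iff] at this
    exact ENNReal.toReal_le_of_le_ofReal (by linarith) this
  unfold dC
  linarith

/-- density. Under `Σ 1/λ_n = ∞`, the doubling condition and `λ_n ≥ 1`, for
every point `a ∈ 𝕋`, every admissible pair `(f,E)` (with `0 ≤ f ≤ 2` a.e.,
`‖f‖_{ℓ²(λ)} < ∞`, `E` nonempty compact containing the support of `f·m`) and every `δ > 0`
there is an admissible pair `(g,K)` with `K` avoiding some open arc containing `a` and
`d_𝒞(E,K) + ‖f − g‖_{ℓ²(λ)} < δ`. -/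
theorem statement15 (lam : ℕ → ℝ) (hlam : ∀ n, 1 ≤ lam n)
    (hdiv : ¬ Summable (fun n : ℕ => 1 / lam (n + 1)))
    (hdbl : ∃ C : ℝ, 1 < C ∧ ∀ n k : ℕ, 1 ≤ n → n ≤ k → k ≤ 2 * n →
      C⁻¹ * lam n ≤ lam k ∧ lam k ≤ C * lam n)
    (a : UnitAddCircle)
    (f : UnitAddCircle → ℝ) (hf2 : MemLp f 2 hm)
    (hfbd : ∀ᵐ x ∂hm, 0 ≤ f x ∧ f x ≤ 2)
    (hfsum : Summable (fun n : ℤ => ‖fc f n‖ ^ 2 * lam n.natAbs))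
    (E : Set UnitAddCircle) (hE : IsCompact E) (hEne : E.Nonempty)
    (hsupp : measSupport f ⊆ E) (δ : ℝ) (hδ : 0 < δ) :
    ∃ g : UnitAddCircle → ℝ, ∃ K : Set UnitAddCircle,
      MemLp g 2 hm ∧ (∀ᵐ x ∂hm, 0 ≤ g x ∧ g x ≤ 2) ∧
      Summable (fun n : ℤ => ‖fc g n‖ ^ 2 * lam n.natAbs) ∧
      IsCompact K ∧ K.Nonempty ∧ measSupport g ⊆ K ∧
      (∃ ρ : ℝ, 0 < ρ ∧ ∀ y ∈ K, ¬ dist y a < ρ) ∧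
      dC E K + dlam lam f g < δ := by
  have hl : ∀ n, 0 < lam n := fun n => by linarith [hlam n]
  obtain ⟨C, hC1, hC⟩ := hdbl
  have hC0 : 0 < C := by linarith
  obtain ⟨q, hq⟩ := dbl_aux lam hlam C hC1 hC
  have hdd := dbl_dd lam C q hq
  obtain ⟨D, hD0, hD⟩ := weight_shift lam hlam C q hC0 hdd
  set η := min (δ/8) (1/2) with hη
  have hη0 : 0 < η := by positivity
  have hη1 : η ≤ δ/8 := min_le_left _ _
  have hη2 : η ≤ 1/2 := min_le_right _ _
  set s := δ^2/36 with hs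
  have hs0 : 0 < s := by positivity
  obtain ⟨f1, hf1c, hf1b, hf1z, hf1s, hf1l, hd1s, hd1⟩ :=
    moll lam hlam f hf2 hfbd hfsum E hsupp η s hη0 hs0 q
  obtain ⟨B, hB0, hB⟩ := mult lam hlam D q hD0 hD f1 hf1c hf1s
  set S := ∑' n : ℤ, ‖fc f1 n‖ ^ 2 * lam n.natAbs with hS
  have hS0 : 0 ≤ S := tsum_nonneg fun n => mul_nonneg (by positivity) (hl _).le
  set ε := min 1 (s/(S+1)) with hε
  have hε0 : 0 < ε := by positivity
  have hε1 : ε ≤ 1 := min_le_left _ _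
  have hε2 : ε ^ 2 * S ≤ s := by
    have h1 : ε ≤ s/(S+1) := min_le_right _ _
    rw [le_div_iff₀ (by positivity)] at h1
    nlinarith [mul_nonneg hε0.le hS0]
  obtain ⟨φ, hφc, hφb, ⟨ρ, hρ, hφ1⟩, hφs, hφτ⟩ :=
    phi_exists lam hlam hdiv C q hC0 hdd a ε (s/(B+1)) hε0 (by positivity)
  obtain ⟨hps, hpb⟩ := hB φ hφc hφs
  have hpb2 : ∑' n : ℤ, ‖fc (fun x => f1 x * φ x) n‖ ^ 2 * lam n.natAbs ≤ s := by
    refine hpb.trans ((mul_le_mul_of_nonneg_left hφτ hB0).trans ?_)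
    rw [mul_div_assoc', div_le_iff₀ (by positivity)]
    nlinarith
  set c := (1+ε)⁻¹ with hc
  have hc0 : 0 < c := by positivity
  have hc1 : c * (1 + ε) = 1 := inv_mul_cancel₀ (by positivity)
  have hc2 : c ≤ 1 := by nlinarith
  set g : UnitAddCircle → ℝ := fun x => c * (f1 x * (1 - φ x)) with hg
  have hgc : Continuous g := by rw [hg]; fun_prop
  have hgb : ∀ x, 0 ≤ g x ∧ g x ≤ 2 := by
    intro x
    have h1 := hf1b x
    have h2 := hφb x
    refine ⟨mul_nonneg hc0.le (mul_nonneg h1.1 (by linarith)), ?_⟩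
    have h3 : f1 x * (1 - φ x) ≤ 2 * (1 + ε) :=
      mul_le_mul h1.2 (by linarith) (by linarith) (by norm_num)
    calc g x ≤ c * (2 * (1 + ε)) := mul_le_mul_of_nonneg_left h3 hc0.le
      _ = 2 := by linear_combination 2 * hc1
  have hfg : ∀ n, fc g n = (c:ℂ) * (fc f1 n - fc (fun x => f1 x * φ x) n) :=
    fun n => fc_g f1 φ hf1c hφc c n
  set r := min ρ (η/2) with hr
  have hr0 : 0 < r := by positivity
  have hrρ : r ≤ ρ := min_le_left _ _
  have hrη : r ≤ η/2 := min_le_right _ _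
  obtain ⟨hKc, hKne, hdC⟩ := geom E hEne a η r hr0 (by linarith) hη2
  have hnc : ‖(c:ℂ)‖ = c := by rw [Complex.norm_real, Real.norm_of_nonneg hc0.le]
  refine ⟨g, _, ?_, Eventually.of_forall hgb, ?_, hKc, hKne, ?_, ⟨r, hr0, fun y hy => hy.2⟩, ?_⟩
  · refine MemLp.of_bound hgc.aestronglyMeasurable 2 (Eventually.of_forall fun x => ?_)
    rw [Real.norm_of_nonneg (hgb x).1]; exact (hgb x).2
  · refine Summable.of_nonneg_of_le (fun n => mul_nonneg (by positivity) (hl _).le) (fun n => ?_)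
      ((hf1l.add hps).mul_left 2)
    rw [← add_mul, ← mul_assoc]
    refine mul_le_mul_of_nonneg_right ?_ (hl _).le
    rw [hfg, norm_mul, hnc]
    have h1 := norm_sub_le (fc f1 n) (fc (fun x => f1 x * φ x) n)
    set u := ‖fc f1 n‖
    set v := ‖fc (fun x => f1 x * φ x) n‖
    set w := ‖fc f1 n - fc (fun x => f1 x * φ x) n‖
    have hw : 0 ≤ w := norm_nonneg _
    have h2 : c * w ≤ u + v := by nlinarith
    have h3 : (c * w)^2 ≤ (u+v)^2 := pow_le_pow_left₀ (by positivity) h2 2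
    nlinarith [sq_nonneg (u - v)]
  · unfold measSupport
    rw [Set.compl_subset_comm]
    refine Set.subset_sUnion_of_mem ⟨hKc.isClosed.isOpen_compl, Eventually.of_forall fun x hx => ?_⟩
    simp only [hg]
    by_cases h : x ∈ Metric.cthickening η E
    · have hx2 : dist x a < r := by
        by_contra h'
        exact hx ⟨h, h'⟩
      rw [hφ1 x (by linarith)]; ring
    · rw [hf1z x h]; ring
  · have hle : ∀ n : ℤ, ‖fc f n - fc g n‖ ^ 2 * lam n.natAbs ≤
        3 * (‖fc f n - fc f1 n‖ ^ 2 * lam n.natAbs + ε ^ 2 * (‖fc f1 n‖ ^ 2 * lam n.natAbs)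
          + ‖fc (fun x => f1 x * φ x) n‖ ^ 2 * lam n.natAbs) := by
      intro n
      have e : fc f n - fc g n = (fc f n - fc f1 n) +
          ((c:ℂ) * ((ε:ℂ) * fc f1 n) + (c:ℂ) * fc (fun x => f1 x * φ x) n) := by
        rw [hfg]
        have : (c:ℂ) * (1 + ε) = 1 := by exact_mod_cast hc1
        linear_combination (-fc f1 n) * this
      have h1 : ‖fc f n - fc g n‖ ≤ ‖fc f n - fc f1 n‖ + (ε * ‖fc f1 n‖ + ‖fc (fun x => f1 x * φ x) n‖) := by
        rw [e]
        refine (norm_add_le _ _).trans (add_le_add le_rfl ((norm_add_le _ _).trans (add_le_add ?_ ?_)))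
        · rw [norm_mul, norm_mul, hnc, Complex.norm_real, Real.norm_of_nonneg hε0.le]
          exact mul_le_of_le_one_left (by positivity) hc2
        · rw [norm_mul, hnc]
          exact mul_le_of_le_one_left (by positivity) hc2
      have h2 := pow_le_pow_left₀ (norm_nonneg _) h1 2
      have h3 : ‖fc f n - fc g n‖ ^ 2 ≤ 3 * (‖fc f n - fc f1 n‖ ^ 2 + ε ^ 2 * ‖fc f1 n‖ ^ 2
          + ‖fc (fun x => f1 x * φ x) n‖ ^ 2) := by
        refine h2.trans ?_
        set x := ‖fc f n - fc f1 n‖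
        set y := ‖fc f1 n‖
        set z := ‖fc (fun x => f1 x * φ x) n‖
        nlinarith [sq_nonneg (x - ε * y), sq_nonneg (x - z), sq_nonneg (ε * y - z)]
      calc _ ≤ _ := mul_le_mul_of_nonneg_right h3 (hl n.natAbs).le
        _ = _ := by ring
    have hsum := ((hd1s.add (hf1l.mul_left (ε^2))).add hps).mul_left 3
    have hT : ∑' n : ℤ, ‖fc f n - fc g n‖ ^ 2 * lam n.natAbs < (δ/2)^2 := by
      have h1 := Summable.tsum_le_tsum hle (Summable.of_nonneg_of_le
        (fun n => mul_nonneg (by positivity) (hl _).le) hle hsum) hsum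
      rw [tsum_mul_left, (hd1s.add (hf1l.mul_left (ε^2))).tsum_add hps,
        hd1s.tsum_add (hf1l.mul_left (ε^2)), tsum_mul_left] at h1
      have : (δ/2)^2 = 9 * s := by rw [hs]; ring
      rw [this]
      linarith
    have hdl : dlam lam f g < δ/2 := by
      unfold dlam
      exact (Real.sqrt_lt' (by positivity)).2 hT
    linarith
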